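/- Let m ≥ 3 be a prime, n = 2^m − 1, h2 = (2^{m−1} − 1)/m and h1 = (h2 + 1)/2 (both integers). For a ∈ {1, …, n − 1}, the 2-cyclotomic coset of a modulo n is {a·2^i mod n : i ≥ 0}, and its coset leader is its least element; let δ_1 < δ_2 < ⋯ be the distinct coset leaders of the nonzero 2-cyclotomic cosets modulo n, listed in increasing order. Let β be a primitive element of F_{2^m}, let g1(x) = lcm(m_β(x), …, m_{β^{δ_{h1} − 1}}(x)) (with g1(x) = 1 when δ_{h1} = 1), the generator polynomial of the BCH code C_{(2,n,δ_{h1},1)}, and let g(x) = lcm(m_β(x), …, m_{β^{δ_{h2} + 1}}(x)), the generator polynomial of the BCH code C_{(2,n,δ_{h2}+2,1)}. Then g1(x) divides g(x), and the cyclic code of length 2n over F_2 with generator polynomial g1(x)·g(x) has dimension n + 2^{m−2} + (m + 1)/2 and minimum distance at least (n − 1)/m. -/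

import Mathlib

open Polynomial

/-- The cyclic code of length `N` over the field `F` generated by the polynomial `g`.
Codewords are identified with the representatives of degree `< N` of the elements of the
ideal generated by `g` in `F[x]/(x^N - 1)`; equivalently, a polynomial `c` of degree `< N`
is a codeword iff `c ∈ (g, x^N - 1)` as an ideal of `F[x]`. -/
noncomputable def cyclicCode (F : Type*) [Field F] (N : ℕ) (g : Polynomial F) :
    Submodule F (Polynomial F) :=
  Polynomial.degreeLT F N ⊓
    Submodule.restrictScalars F (Ideal.span ({g, Polynomial.X ^ N - 1} : Set (Polynomial F)))

/-- The minimum distance (equivalently, the minimum Hamming weight of a nonzero codeword,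
a codeword being identified with its coefficient vector) of a linear code of polynomials. -/
noncomputable def minDist {F : Type*} [Field F] (C : Submodule F (Polynomial F)) : ℕ :=
  sInf {w | ∃ c ∈ C, c ≠ 0 ∧ c.support.card = w}

/-- The set of coset leaders of the nonzero `2`-cyclotomic cosets modulo `n`:
`a ∈ {1, …, n-1}` is a coset leader iff it is the least element of its coset
`{a·2^i mod n : i ≥ 0}`. -/
def cosetLeaders (n : ℕ) : Set ℕ :=
  {a | 0 < a ∧ a < n ∧ ∀ i : ℕ, a ≤ a * 2 ^ i % n}

/-- `δ` is the `h`-th smallest coset leader (i.e. `δ = δ_h` where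
`δ_1 < δ_2 < ⋯` lists the coset leaders in increasing order). -/
def IsNthSmallestLeader (n h δ : ℕ) : Prop :=
  δ ∈ cosetLeaders n ∧ {a ∈ cosetLeaders n | a ≤ δ}.ncard = h

/-!
Over a field of characteristic two, `x ^ (2 * n) - 1 = (x ^ n - 1) ^ 2`. Writing a codeword of the
code of length `2 * n` as `a + x ^ n * b` exhibits this code as an instance of the `(u | u + v)`
construction: `g` divides `a + b`, and if `a + b = 0` then `g₁` divides `b`, because `x ^ n - 1` is
squarefree for odd `n`. So its minimum distance is at least `min (2 * d(g₁)) (d(g))`, and the BCH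
bound gives `d(g₁) ≥ δ_{h₁}` and `d(g) ≥ δ_{h₂} + 2`. Coset leaders are odd, so
`δ_h ≥ 2 * h - 1`; this is where the explicit bound comes from.

For the dimension, `g` is the product of the minimal polynomials of `β ^ a` over the coset leaders
`a ≤ δ_{h₂} + 1`, and each factor has degree `m` because `m` is prime.
-/

section CosetLeaders

open scoped Nat

variable {n h h₁ h₂ δ δ₁ δ₂ : ℕ}

theorem exists_cosetLeader_le {j : ℕ} (hn : Odd n) (hj₀ : 0 < j) (hj : j < n) :
    ∃ i, j * 2 ^ i % n ∈ cosetLeaders n ∧ j * 2 ^ i % n ≤ j := by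
  let residue (i : ℕ) : ℕ := j * 2 ^ i % n
  obtain ⟨i, hmin⟩ : ∃ i, ∀ k, residue i ≤ residue k :=
    ⟨Function.argmin residue, fun k ↦ Function.argmin_le residue k⟩
  refine ⟨i, ⟨Nat.pos_of_ne_zero fun h ↦ ?_, Nat.mod_lt _ hn.pos, fun k ↦ ?_⟩, ?_⟩
  · have hcop : n.Coprime (2 ^ i) := (Nat.coprime_two_right.2 hn).pow_right i
    exact Nat.not_dvd_of_pos_of_lt hj₀ hj
      (hcop.dvd_of_dvd_mul_right (Nat.dvd_of_mod_eq_zero h))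
  · simpa only [residue, Nat.mod_mul_mod, pow_add, mul_assoc] using hmin (i + k)
  · simpa only [residue, pow_zero, mul_one, Nat.mod_eq_of_lt hj] using hmin 0

theorem odd_of_mem_cosetLeaders {a : ℕ} (hn : Odd n) (ha : a ∈ cosetLeaders n) : Odd a := by
  obtain ⟨ha₀, han, hmin⟩ := ha
  by_contra heven
  obtain ⟨b, rfl⟩ := (Nat.not_odd_iff_even.mp heven).two_dvd
  have hφ : φ n - 1 + 1 = φ n := Nat.sub_add_cancel (Nat.totient_pos.2 hn.pos)
  have half_mem_coset : 2 * b * 2 ^ (φ n - 1) % n = b := by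
    have : 2 * b * 2 ^ (φ n - 1) = b * 2 ^ φ n := by
      rw [mul_comm 2, mul_assoc, ← pow_succ', hφ]
    rw [this, (Nat.ModEq.pow_totient (Nat.coprime_two_left.2 hn)).mul_left b, mul_one,
      Nat.mod_eq_of_lt (by omega)]
  have := hmin (φ n - 1)
  omega

open Classical in
/-- The coset leaders not exceeding `D`, as a finset; they index the distinct irreducible factors of
the BCH generator polynomial with zeros `β, …, β ^ D`. -/
noncomputable def cosetLeadersLE (n D : ℕ) : Finset ℕ :=
  {a ∈ Finset.Iic D | a ∈ cosetLeaders n}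

@[simp]
theorem mem_cosetLeadersLE {a D : ℕ} : a ∈ cosetLeadersLE n D ↔ a ≤ D ∧ a ∈ cosetLeaders n := by
  simp [cosetLeadersLE]

theorem cosetLeadersLE_mono {D D' : ℕ} (h : D ≤ D') : cosetLeadersLE n D ⊆ cosetLeadersLE n D' :=
  fun a ha ↦ by
    rw [mem_cosetLeadersLE] at ha ⊢
    exact ⟨ha.1.trans h, ha.2⟩

namespace IsNthSmallestLeader

theorem card_cosetLeadersLE (hδ : IsNthSmallestLeader n h δ) : (cosetLeadersLE n δ).card = h := by
  rw [← hδ.2, ← Set.ncard_coe_finset]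
  congr 1
  ext a
  simp [and_comm]

theorem card_cosetLeadersLE_sub_one (hδ : IsNthSmallestLeader n h δ) :
    (cosetLeadersLE n (δ - 1)).card = h - 1 := by
  have hδ₀ : 0 < δ := hδ.1.1
  have : cosetLeadersLE n (δ - 1) = (cosetLeadersLE n δ).erase δ := by
    ext a
    simp only [mem_cosetLeadersLE, Finset.mem_erase]
    grind
  rw [this, Finset.card_erase_of_mem (by simpa using hδ.1), hδ.card_cosetLeadersLE]

theorem card_cosetLeadersLE_add_one (hn : Odd n) (hδ : IsNthSmallestLeader n h δ) :
    (cosetLeadersLE n (δ + 1)).card = h := by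
  have hodd := odd_of_mem_cosetLeaders hn hδ.1
  have succ_notMem : δ + 1 ∉ cosetLeaders n := fun hmem ↦
    Nat.not_odd_iff_even.2 hodd.add_one (odd_of_mem_cosetLeaders hn hmem)
  have : cosetLeadersLE n (δ + 1) = cosetLeadersLE n δ := by
    ext a
    simp only [mem_cosetLeadersLE]
    grind
  rw [this, hδ.card_cosetLeadersLE]

theorem le_of_le (hδ₁ : IsNthSmallestLeader n h₁ δ₁) (hδ₂ : IsNthSmallestLeader n h₂ δ₂)
    (h : h₁ ≤ h₂) : δ₁ ≤ δ₂ := by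
  by_contra! hlt
  have hss : cosetLeadersLE n δ₂ ⊂ cosetLeadersLE n δ₁ :=
    Finset.ssubset_iff_subset_ne.2 ⟨cosetLeadersLE_mono hlt.le, fun heq ↦ by
      have : δ₁ ∈ cosetLeadersLE n δ₂ := heq ▸ mem_cosetLeadersLE.2 ⟨le_rfl, hδ₁.1⟩
      exact hlt.not_ge (mem_cosetLeadersLE.1 this).1⟩
  have := Finset.card_lt_card hss
  rw [hδ₁.card_cosetLeadersLE, hδ₂.card_cosetLeadersLE] at this
  omega

theorem two_mul_le_add_one (hn : Odd n) (hδ : IsNthSmallestLeader n h δ) : 2 * h ≤ δ + 1 := by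
  have hodd := odd_of_mem_cosetLeaders hn hδ.1
  have : (cosetLeadersLE n δ).card ≤ (Finset.range ((δ + 1) / 2)).card := by
    refine Finset.card_le_card_of_injOn (· / 2) (fun a ha ↦ ?_) (fun a ha b hb hab ↦ ?_)
    · have ha := mem_cosetLeadersLE.1 ha
      have := odd_of_mem_cosetLeaders hn ha.2
      simp only [Finset.coe_range, Set.mem_Iio]
      grind
    · have ha := odd_of_mem_cosetLeaders hn (mem_cosetLeadersLE.1 ha).2
      have hb := odd_of_mem_cosetLeaders hn (mem_cosetLeadersLE.1 hb).2
      simp only at hab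
      grind
  rw [hδ.card_cosetLeadersLE, Finset.card_range] at this
  omega

theorem add_one_lt (hn : Odd n) (hδ : IsNthSmallestLeader n h δ) : δ + 1 < n := by
  have hodd := odd_of_mem_cosetLeaders hn hδ.1
  have := hδ.1.2.1
  grind

end IsNthSmallestLeader

end CosetLeaders

section MinimalPolynomials

theorem natDegree_minpoly_eq_finrank_of_prime {F K : Type*} [Field F] [Field K] [Algebra F K]
    (hp : (Module.finrank F K).Prime) {x : K} (hx : x ∉ (algebraMap F K).range) :
    (minpoly F x).natDegree = Module.finrank F K := by
  have : FiniteDimensional F K := Module.finite_of_finrank_pos hp.pos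
  refine ((Nat.dvd_prime hp).1 (minpoly.degree_dvd (.of_finite F x))).resolve_left ?_
  rwa [minpoly.natDegree_eq_one_iff]

theorem isCoprime_minpoly {F A : Type*} [Field F] [Ring A] [IsDomain A] [Algebra F A] {x y : A}
    (hx : IsIntegral F x) (hy : IsIntegral F y) (h : minpoly F x ≠ minpoly F y) :
    IsCoprime (minpoly F x) (minpoly F y) := by
  refine (minpoly.irreducible hx).coprime_iff_not_dvd.2 fun hdvd ↦ h ?_
  exact eq_of_monic_of_associated (minpoly.monic hx) (minpoly.monic hy)
    ((minpoly.irreducible hx).associated_of_dvd (minpoly.irreducible hy) hdvd)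

theorem minpoly_eq_minpoly_iff_exists_pow_card_pow {F K : Type*} [Field F] [Fintype F] [Field K]
    [Finite K] [Algebra F K] {x y : K} :
    minpoly F x = minpoly F y ↔ ∃ i : ℕ, y = x ^ Fintype.card F ^ i := by
  have frob_apply (i : ℕ) : (FiniteField.frobeniusAlgEquivOfAlgebraic F K ^ i) x =
      x ^ Fintype.card F ^ i := by
    rw [AlgEquiv.coe_pow, FiniteField.coe_frobeniusAlgEquivOfAlgebraic_iterate]
  constructor
  · intro h
    obtain ⟨σ, hσ⟩ := (Normal.minpoly_eq_iff_mem_orbit K).1 h.symm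
    obtain ⟨i, rfl⟩ := (FiniteField.bijective_frobeniusAlgEquivOfAlgebraic_pow F K).2 σ
    exact ⟨i, hσ.symm.trans (frob_apply i)⟩
  · rintro ⟨i, rfl⟩
    rw [← frob_apply, minpoly.algEquiv_eq]

variable {K : Type*} [Field K] [Algebra (ZMod 2) K] {β : K} {n : ℕ}

theorem exists_cosetLeader_minpoly_eq [Finite K] {j : ℕ} (hn : Odd n) (hβ : IsPrimitiveRoot β n)
    (hj₀ : 0 < j) (hj : j < n) :
    ∃ a ∈ cosetLeaders n, a ≤ j ∧ minpoly (ZMod 2) (β ^ j) = minpoly (ZMod 2) (β ^ a) := by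
  obtain ⟨i, hmem, hle⟩ := exists_cosetLeader_le hn hj₀ hj
  refine ⟨_, hmem, hle, minpoly_eq_minpoly_iff_exists_pow_card_pow.2 ⟨i, ?_⟩⟩
  rw [hβ.eq_orderOf, pow_mod_orderOf, pow_mul, ZMod.card]

theorem injOn_minpoly_pow_cosetLeaders [Finite K] (hβ : IsPrimitiveRoot β n) :
    Set.InjOn (fun a ↦ minpoly (ZMod 2) (β ^ a)) (cosetLeaders n) := by
  have le_of_eq {a b : ℕ} (ha : a ∈ cosetLeaders n) (hb : b ∈ cosetLeaders n)
      (h : minpoly (ZMod 2) (β ^ a) = minpoly (ZMod 2) (β ^ b)) : a ≤ b := by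
    obtain ⟨i, hi⟩ := minpoly_eq_minpoly_iff_exists_pow_card_pow.1 h
    rw [ZMod.card, ← pow_mul, ← pow_mod_orderOf β (a * 2 ^ i), ← hβ.eq_orderOf] at hi
    rw [hβ.pow_inj hb.2.1 (Nat.mod_lt _ (hb.1.trans hb.2.1)) hi]
    exact ha.2.2 i
  exact fun a ha b hb h ↦ (le_of_eq ha hb h).antisymm (le_of_eq hb ha h.symm)

theorem natDegree_minpoly_pow_eq_finrank (hp : (Module.finrank (ZMod 2) K).Prime)
    (hβ : IsPrimitiveRoot β n) {a : ℕ} (ha₀ : 0 < a) (ha : a < n) :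
    (minpoly (ZMod 2) (β ^ a)).natDegree = Module.finrank (ZMod 2) K := by
  refine natDegree_minpoly_eq_finrank_of_prime hp ?_
  rintro ⟨c, hc⟩
  fin_cases c
  · exact pow_ne_zero a (hβ.ne_zero (by omega)) (hc.symm.trans (map_zero _))
  · exact hβ.pow_ne_one_of_pos_of_lt ha₀.ne' ha (hc.symm.trans (map_one _))

end MinimalPolynomials

section BCHGenerator

/-- The generator polynomial of the narrow-sense BCH code over `F` with zeros `β, …, β ^ D`, that
is, of designed distance `D + 1`. -/
noncomputable def bchGenerator (F : Type*) {K : Type*} [Field F] [DecidableEq F] [Field K]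
    [Algebra F K] (β : K) (D : ℕ) : F[X] :=
  (Finset.Icc 1 D).lcm fun j ↦ minpoly F (β ^ j)

section

variable {F K : Type*} [Field F] [DecidableEq F] [Field K] [Algebra F K] {β : K} {n D D' : ℕ}

theorem bchGenerator_dvd_bchGenerator (h : D ≤ D') : bchGenerator F β D ∣ bchGenerator F β D' :=
  Finset.lcm_mono (Finset.Icc_subset_Icc le_rfl h)

theorem bchGenerator_dvd_of_aeval_eq_zero {p : F[X]}
    (h : ∀ j ∈ Finset.Icc 1 D, aeval (β ^ j) p = 0) : bchGenerator F β D ∣ p :=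
  Finset.lcm_dvd fun j hj ↦ minpoly.dvd F _ (h j hj)

theorem aeval_eq_zero_of_bchGenerator_dvd {p : F[X]} (h : bchGenerator F β D ∣ p) {j : ℕ}
    (hj : j ∈ Finset.Icc 1 D) : aeval (β ^ j) p = 0 :=
  minpoly.dvd_iff.1 ((Finset.dvd_lcm (f := fun j ↦ minpoly F (β ^ j)) hj).trans h)

theorem bchGenerator_dvd_X_pow_sub_one (hβ : IsPrimitiveRoot β n) :
    bchGenerator F β D ∣ X ^ n - 1 :=
  bchGenerator_dvd_of_aeval_eq_zero fun j _ ↦ by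
    simp [← pow_mul, mul_comm j n, pow_mul β n j, hβ.pow_eq_one]

theorem bchGenerator_dvd_geom_sum (hβ : IsPrimitiveRoot β n) (hD : D < n) :
    bchGenerator F β D ∣ ∑ i ∈ Finset.range n, X ^ i :=
  bchGenerator_dvd_of_aeval_eq_zero fun j hj ↦ by
    rw [Finset.mem_Icc] at hj
    have hne : β ^ j - 1 ≠ 0 :=
      sub_ne_zero.2 (hβ.pow_ne_one_of_pos_of_lt (by omega) (by omega))
    refine eq_zero_of_ne_zero_of_mul_right_eq_zero hne ?_
    simp only [map_sum, map_pow, aeval_X]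
    rw [geom_sum_mul, pow_right_comm, hβ.pow_eq_one, one_pow, sub_self]

end

variable {K : Type*} [Field K] [Finite K] [Algebra (ZMod 2) K] {β : K} {n D : ℕ}

theorem bchGenerator_eq_prod_minpoly (hn : Odd n) (hβ : IsPrimitiveRoot β n) (hD : D < n) :
    bchGenerator (ZMod 2) β D = ∏ a ∈ cosetLeadersLE n D, minpoly (ZMod 2) (β ^ a) := by
  have hint (j : ℕ) : IsIntegral (ZMod 2) (β ^ j) := .of_finite _ _
  refine dvd_antisymm_of_normalize_eq Finset.normalize_lcm
    (monic_prod_of_monic _ _ fun a _ ↦ minpoly.monic (hint a)).normalize_eq_self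
    (Finset.lcm_dvd fun j hj ↦ ?_)
    (Finset.prod_dvd_of_coprime (fun a ha b hb hab ↦ ?_) fun a ha ↦ ?_)
  · rw [Finset.mem_Icc] at hj
    obtain ⟨a, ha, haj, heq⟩ := exists_cosetLeader_minpoly_eq hn hβ (by omega) (hj.2.trans_lt hD)
    rw [heq]
    exact Finset.dvd_prod_of_mem _ (mem_cosetLeadersLE.2 ⟨haj.trans hj.2, ha⟩)
  · have ha := (mem_cosetLeadersLE.1 ha).2
    have hb := (mem_cosetLeadersLE.1 hb).2
    exact isCoprime_minpoly (hint a) (hint b) ((injOn_minpoly_pow_cosetLeaders hβ).ne ha hb hab)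
  · rw [mem_cosetLeadersLE] at ha
    exact Finset.dvd_lcm (f := fun j ↦ minpoly (ZMod 2) (β ^ j))
      (Finset.mem_Icc.2 ⟨ha.2.1, ha.1⟩)

theorem natDegree_bchGenerator (hp : (Module.finrank (ZMod 2) K).Prime) (hn : Odd n)
    (hβ : IsPrimitiveRoot β n) (hD : D < n) :
    (bchGenerator (ZMod 2) β D).natDegree =
      (cosetLeadersLE n D).card * Module.finrank (ZMod 2) K := by
  rw [bchGenerator_eq_prod_minpoly hn hβ hD,
    natDegree_prod_of_monic _ _ fun a _ ↦ minpoly.monic (.of_finite _ _)]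
  refine Finset.sum_const_nat fun a ha ↦ ?_
  obtain ⟨ha₀, han, -⟩ := (mem_cosetLeadersLE.1 ha).2
  exact natDegree_minpoly_pow_eq_finrank hp hβ ha₀ han

end BCHGenerator

section CyclicCode

variable {F : Type*} [Field F] {N : ℕ} {G : F[X]}

theorem mem_cyclicCode_iff (hd : G ∣ X ^ N - 1) {c : F[X]} :
    c ∈ cyclicCode F N G ↔ c.degree < N ∧ G ∣ c := by
  have hspan : Ideal.span {G, X ^ N - 1} = Ideal.span {G} := by
    rw [Ideal.span_insert, sup_eq_left]
    exact Ideal.span_singleton_le_span_singleton.2 hd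
  rw [cyclicCode, hspan, Submodule.mem_inf, Submodule.restrictScalars_mem, mem_degreeLT,
    Ideal.mem_span_singleton]

theorem finrank_cyclicCode (hN : N ≠ 0) (hd : G ∣ X ^ N - 1) :
    Module.finrank F (cyclicCode F N G) = N - G.natDegree := by
  have hG : G ≠ 0 :=
    ne_zero_of_dvd_ne_zero (monic_X_pow_sub_C (1 : F) hN).ne_zero (by rwa [map_one])
  have hmap : cyclicCode F N G = (degreeLT F (N - G.natDegree)).map (LinearMap.mulLeft F G) := by
    ext c
    have degree_mul_lt_iff (q : F[X]) : (G * q).degree < N ↔ q.degree < ↑(N - G.natDegree) := by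
      rcases eq_or_ne q 0 with rfl | hq
      · simp
      · rw [← natDegree_lt_iff_degree_lt (mul_ne_zero hG hq), ← natDegree_lt_iff_degree_lt hq,
          natDegree_mul hG hq, Nat.lt_sub_iff_add_lt']
    simp only [mem_cyclicCode_iff hd, Submodule.mem_map, mem_degreeLT, LinearMap.mulLeft_apply]
    constructor
    · rintro ⟨hc, q, rfl⟩
      exact ⟨q, (degree_mul_lt_iff q).1 hc, rfl⟩
    · rintro ⟨q, hq, rfl⟩
      exact ⟨(degree_mul_lt_iff q).2 hq, dvd_mul_right G q⟩
  have hinj : Function.Injective (LinearMap.mulLeft F G) := fun _ _ h ↦ mul_left_cancel₀ hG h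
  rw [hmap, ← (Submodule.equivMapOfInjective _ hinj _).finrank_eq,
    (degreeLTEquiv F _).finrank_eq, Module.finrank_fin_fun]

theorem minDist_le_card_support {C : Submodule F F[X]} {c : F[X]} (hc : c ∈ C) (hc₀ : c ≠ 0) :
    minDist C ≤ c.support.card :=
  Nat.sInf_le ⟨c, hc, hc₀, rfl⟩

theorem le_minDist {C : Submodule F F[X]} {d : ℕ} (hC : C ≠ ⊥)
    (h : ∀ c ∈ C, c ≠ 0 → d ≤ c.support.card) : d ≤ minDist C := by
  obtain ⟨c, hc, hc₀⟩ := C.ne_bot_iff.1 hC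
  refine le_csInf ⟨_, c, hc, hc₀, rfl⟩ ?_
  rintro _ ⟨c, hc, hc₀, rfl⟩
  exact h c hc hc₀

theorem minDist_bot : minDist (⊥ : Submodule F F[X]) = 0 := by
  have : {w | ∃ c ∈ (⊥ : Submodule F F[X]), c ≠ 0 ∧ c.support.card = w} = ∅ := by
    ext w
    simp
  rw [minDist, this, Nat.sInf_empty]

end CyclicCode

section BCHBound

-- The coefficients of `p` solve a Vandermonde system in the `β ^ k`, `k ∈ p.support`.
theorem lt_card_support_of_aeval_eq_zero {F K : Type*} [Field F] [CommRing K] [IsDomain K]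
    [Algebra F K] {β : K} {n : ℕ} (hβ : IsPrimitiveRoot β n) {p : F[X]} (hp : p ≠ 0)
    (hdeg : p.degree < n) {b d : ℕ} (hroot : ∀ j < d, aeval (β ^ (b + j)) p = 0) :
    d < p.support.card := by
  by_contra! hle
  have exp_lt {k : ℕ} (hk : k ∈ p.support) : k < n := by
    exact_mod_cast (le_degree_of_mem_supp k hk).trans_lt hdeg
  let e := p.support.equivFin.symm
  have coeff_eq_zero := Matrix.eq_zero_of_forall_pow_sum_mul_pow_eq_zero
    (f := fun i ↦ β ^ (e i : ℕ))
    (v := fun i ↦ algebraMap F K (p.coeff (e i)) * β ^ (b * e i))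
    (fun i j hij ↦ e.injective (Subtype.ext (hβ.pow_inj (exp_lt (e i).2) (exp_lt (e j).2) hij)))
    (fun i ↦ by
      have hsum := hroot i (i.2.trans_le hle)
      rw [aeval_def, eval₂_eq_sum, sum_def, ← Finset.sum_coe_sort, ← e.sum_comp] at hsum
      exact (Finset.sum_congr rfl fun j _ ↦ by ring).trans hsum)
  let i₀ : Fin p.support.card := ⟨0, Finset.card_pos.2 (support_nonempty.2 hp)⟩
  have hk := (e i₀).2
  have hβ₀ : β ≠ 0 := hβ.ne_zero (Nat.zero_lt_of_lt (exp_lt hk)).ne'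
  rcases mul_eq_zero.1 (congrFun coeff_eq_zero i₀) with h | h
  · exact mem_support_iff.1 hk ((map_eq_zero_iff _ (algebraMap F K).injective).1 h)
  · exact pow_ne_zero _ hβ₀ h

theorem lt_minDist_cyclicCode_bchGenerator {F K : Type*} [Field F] [DecidableEq F] [Field K]
    [Algebra F K] {β : K} {n D : ℕ} (hβ : IsPrimitiveRoot β n) (hD : D < n) :
    D < minDist (cyclicCode F n (bchGenerator F β D)) := by
  have hd : bchGenerator F β D ∣ X ^ n - 1 := bchGenerator_dvd_X_pow_sub_one hβ
  have hne : cyclicCode F n (bchGenerator F β D) ≠ ⊥ := by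
    refine (Submodule.ne_bot_iff _).2 ⟨∑ i ∈ Finset.range n, X ^ i, (mem_cyclicCode_iff hd).2
      ⟨?_, bchGenerator_dvd_geom_sum hβ hD⟩, ?_⟩
    · refine (degree_sum_le _ _).trans_lt ((Finset.sup_lt_iff (WithBot.bot_lt_coe n)).2 ?_)
      exact fun i hi ↦ (degree_X_pow_le i).trans_lt (Nat.cast_lt.2 (Finset.mem_range.1 hi))
    · refine fun h ↦ one_ne_zero (α := F) ?_
      simpa [coeff_X_pow, Nat.zero_lt_of_lt hD] using congrArg (coeff · 0) h
  refine le_minDist hne fun c hc hc₀ ↦ ?_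
  obtain ⟨hdeg, hdvd⟩ := (mem_cyclicCode_iff hd).1 hc
  refine lt_card_support_of_aeval_eq_zero (b := 1) hβ hc₀ hdeg fun j hj ↦ ?_
  exact aeval_eq_zero_of_bchGenerator_dvd hdvd (Finset.mem_Icc.2 ⟨by omega, by omega⟩)

end BCHBound

section RepeatedRoot

theorem card_support_add_X_pow_mul {R : Type*} [Semiring R] {n : ℕ} {a b : R[X]}
    (ha : a.degree < n) :
    (a + X ^ n * b).support.card = a.support.card + b.support.card := by
  have hdisj : Disjoint a.support (b.support.map (addLeftEmbedding n)) := by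
    refine Finset.disjoint_left.2 fun k hk hk' ↦ ?_
    obtain ⟨l, -, rfl⟩ := Finset.mem_map.1 hk'
    exact mem_support_iff.1 hk
      (coeff_eq_zero_of_degree_lt (ha.trans_le (mod_cast Nat.le_add_right n l)))
  have hsupport : (a + X ^ n * b).support =
      a.support.disjUnion (b.support.map (addLeftEmbedding n)) hdisj := by
    ext k
    rcases lt_or_ge k n with hk | hk
    · have : ∀ l, n + l ≠ k := by omega
      simp [coeff_X_pow_mul', hk.not_ge, this]
    · obtain ⟨l, rfl⟩ := Nat.exists_eq_add_of_le hk
      have : a.coeff (n + l) = 0 :=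
        coeff_eq_zero_of_degree_lt (ha.trans_le (mod_cast Nat.le_add_right n l))
      simp [coeff_X_pow_mul', this]
  rw [hsupport, Finset.card_disjUnion, Finset.card_map]

theorem exists_add_X_pow_mul_eq {R : Type*} [Ring R] [Nontrivial R] {n k : ℕ} {c : R[X]}
    (hc : c.degree < ↑(n + k)) :
    ∃ a b : R[X], a.degree < n ∧ b.degree < k ∧ a + X ^ n * b = c := by
  have hX : (X ^ n : R[X]).Monic := monic_X_pow n
  refine ⟨c %ₘ X ^ n, c /ₘ X ^ n, ?_, ?_, modByMonic_add_div c (X ^ n)⟩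
  · simpa only [degree_X_pow] using degree_modByMonic_lt c hX
  · rcases eq_or_ne (c /ₘ X ^ n) 0 with h₀ | h₀
    · simp [h₀]
    · have hc₀ : c ≠ 0 := by
        rintro rfl
        exact h₀ (zero_divByMonic _)
      rw [← natDegree_lt_iff_degree_lt hc₀] at hc
      have hle : n ≤ c.natDegree := by
        by_contra! hlt
        exact h₀ ((divByMonic_eq_zero_iff hX).2
          (by rwa [degree_X_pow, ← natDegree_lt_iff_degree_lt hc₀]))
      rw [← natDegree_lt_iff_degree_lt h₀, natDegree_divByMonic c hX, natDegree_X_pow]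
      omega

theorem dvd_of_mul_dvd_mul_of_squarefree {M : Type*} [CommMonoidWithZero M] [IsCancelMulZero M]
    [DecompositionMonoid M] {f g₁ g b : M} (hf : Squarefree f) (hg : g ≠ 0) (hg₁ : g₁ ∣ g)
    (hgf : g ∣ f) (h : g₁ * g ∣ f * b) : g₁ ∣ b := by
  obtain ⟨k, rfl⟩ := hgf
  have hdvd : g₁ ∣ k * b := by
    rwa [mul_comm g₁ g, mul_assoc, mul_dvd_mul_iff_left hg] at h
  exact ((squarefree_mul_iff.1 hf).1.of_dvd_left hg₁).dvd_of_dvd_mul_left hdvd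

theorem X_pow_two_mul_sub_one {R : Type*} [CommRing R] [CharP R 2] {n : ℕ} :
    (X ^ (2 * n) - 1 : R[X]) = (X ^ n - 1) * (X ^ n - 1) := by
  rw [← sq, CharTwo.sub_eq_add, CharTwo.sub_eq_add, CharTwo.add_sq, one_pow, ← pow_mul, mul_comm]

theorem mul_dvd_X_pow_two_mul_sub_one {R : Type*} [CommRing R] [CharP R 2] {n : ℕ} {g₁ g : R[X]}
    (h₁ : g₁ ∣ g) (hg : g ∣ X ^ n - 1) : g₁ * g ∣ X ^ (2 * n) - 1 := by
  rw [X_pow_two_mul_sub_one]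
  exact mul_dvd_mul (h₁.trans hg) hg

variable {F : Type*} [Field F] [CharP F 2] {n : ℕ} {g₁ g : F[X]}

theorem squarefree_X_pow_sub_one (hn : Odd n) : Squarefree (X ^ n - 1 : F[X]) := by
  refine (X_pow_sub_one_separable_iff.2 ?_).squarefree
  rwa [Ne, CharP.cast_eq_zero_iff F 2, ← even_iff_two_dvd, Nat.not_even_iff_odd]

theorem min_le_card_support_of_mem_cyclicCode_mul (hn : Odd n) (h₁ : g₁ ∣ g)
    (hg : g ∣ X ^ n - 1) {c : F[X]} (hc : c ∈ cyclicCode F (2 * n) (g₁ * g)) (hc₀ : c ≠ 0) :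
    min (2 * minDist (cyclicCode F n g₁)) (minDist (cyclicCode F n g)) ≤ c.support.card := by
  obtain ⟨hdeg, hdvd⟩ := (mem_cyclicCode_iff (mul_dvd_X_pow_two_mul_sub_one h₁ hg)).1 hc
  obtain ⟨a, b, ha, hb, rfl⟩ : ∃ a b : F[X], a.degree < n ∧ b.degree < n ∧ a + X ^ n * b = c :=
    exists_add_X_pow_mul_eq (by rwa [← two_mul])
  rw [card_support_add_X_pow_mul ha]
  rcases eq_or_ne (a + b) 0 with hab | hab
  · obtain rfl : a = b := CharTwo.add_eq_zero.1 hab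
    have hfactor : a + X ^ n * a = (X ^ n - 1) * a := by rw [CharTwo.sub_eq_add]; ring
    rw [hfactor] at hdvd hc₀
    have ha₁ : a ∈ cyclicCode F n g₁ := (mem_cyclicCode_iff (h₁.trans hg)).2 ⟨ha,
      dvd_of_mul_dvd_mul_of_squarefree (squarefree_X_pow_sub_one hn)
        (ne_zero_of_dvd_ne_zero (left_ne_zero_of_mul hc₀) hg) h₁ hg hdvd⟩
    have := minDist_le_card_support ha₁ (right_ne_zero_of_mul hc₀)
    omega
  · have hdvd_add : g ∣ a + b := by
      have : a + b = a + X ^ n * b - (X ^ n - 1) * b := by ring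
      rw [this]
      exact dvd_sub ((dvd_mul_left g g₁).trans hdvd) (hg.mul_right b)
    have hmem : a + b ∈ cyclicCode F n g :=
      (mem_cyclicCode_iff hg).2 ⟨(degree_add_le a b).trans_lt (max_lt ha hb), hdvd_add⟩
    calc min (2 * minDist (cyclicCode F n g₁)) (minDist (cyclicCode F n g))
        ≤ minDist (cyclicCode F n g) := min_le_right _ _
      _ ≤ (a + b).support.card := minDist_le_card_support hmem hab
      _ ≤ a.support.card + b.support.card :=
        (Finset.card_le_card support_add).trans (Finset.card_union_le _ _)

theorem min_le_minDist_cyclicCode_mul (hn : Odd n) (h₁ : g₁ ∣ g) (hg : g ∣ X ^ n - 1) :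
    min (2 * minDist (cyclicCode F n g₁)) (minDist (cyclicCode F n g)) ≤
      minDist (cyclicCode F (2 * n) (g₁ * g)) := by
  rcases eq_or_ne (cyclicCode F n g₁) ⊥ with hbot | hne
  · simp [hbot, minDist_bot]
  obtain ⟨b, hb, hb₀⟩ := (Submodule.ne_bot_iff _).1 hne
  obtain ⟨hdeg, hdvd⟩ := (mem_cyclicCode_iff (h₁.trans hg)).1 hb
  have hX : (X ^ n - 1 : F[X]) ≠ 0 := (squarefree_X_pow_sub_one hn).ne_zero
  refine le_minDist ((Submodule.ne_bot_iff _).2 ⟨b * (X ^ n - 1), ?_, mul_ne_zero hb₀ hX⟩)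
    fun c hc hc₀ ↦ min_le_card_support_of_mem_cyclicCode_mul hn h₁ hg hc hc₀
  refine (mem_cyclicCode_iff (mul_dvd_X_pow_two_mul_sub_one h₁ hg)).2
    ⟨?_, mul_dvd_mul hdvd hg⟩
  rw [← natDegree_lt_iff_degree_lt hb₀] at hdeg
  have hX_deg : (X ^ n - 1 : F[X]).natDegree = n := natDegree_X_pow_sub_C (r := 1)
  rw [← natDegree_lt_iff_degree_lt (mul_ne_zero hb₀ hX), natDegree_mul hb₀ hX, hX_deg]
  omega

end RepeatedRoot

section Arithmetic

variable {m h₁ h₂ : ℕ}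

theorem two_pow_sub_one_sub_one_div (hm : 0 < m) (hh₂ : m * h₂ = 2 ^ (m - 1) - 1) :
    (2 ^ m - 1 - 1) / m = 2 * h₂ := by
  have hpow : 2 ^ m = 2 * 2 ^ (m - 1) := (mul_pow_sub_one hm.ne' 2).symm
  have : 2 ^ m - 1 - 1 = m * (2 * h₂) := by
    rw [mul_left_comm]
    omega
  rw [this, Nat.mul_div_cancel_left _ hm]

theorem two_mul_two_pow_sub_one_sub_mul (hm : Odd m) (hh₂ : m * h₂ = 2 ^ (m - 1) - 1)
    (hh₁ : 2 * h₁ = h₂ + 1) :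
    2 * (2 ^ m - 1) - (h₁ - 1 + h₂) * m = 2 ^ m - 1 + 2 ^ (m - 2) + (m + 1) / 2 := by
  have hm₁ : m ≠ 1 := by
    rintro rfl
    omega
  have hm_mod : m % 2 = 1 := Nat.odd_iff.1 hm
  have hpow : 2 ^ m = 2 * 2 ^ (m - 1) := (mul_pow_sub_one (by omega) 2).symm
  have hpow' : 2 ^ (m - 1) = 2 * 2 ^ (m - 2) := (mul_pow_sub_one (by omega) 2).symm
  obtain ⟨k, rfl⟩ : ∃ k, h₁ = k + 1 := Nat.exists_eq_succ_of_ne_zero (by omega)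
  obtain rfl : h₂ = 2 * k + 1 := by omega
  have hdim : 2 * ((k + 1 - 1 + (2 * k + 1)) * m) + m = 3 * (m * (2 * k + 1)) := by
    rw [Nat.add_sub_cancel]
    ring
  have := Nat.one_le_two_pow (n := m - 2)
  omega

end Arithmetic

section RepeatedRootBCH

variable {K : Type*} [Field K] [Algebra (ZMod 2) K] {β : K} {n h₁ h₂ δ₁ δ₂ : ℕ}

theorem finrank_cyclicCode_bchGenerator_mul [Finite K] (hp : (Module.finrank (ZMod 2) K).Prime)
    (hn : Odd n) (hβ : IsPrimitiveRoot β n) (hδ₁ : IsNthSmallestLeader n h₁ δ₁)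
    (hδ₂ : IsNthSmallestLeader n h₂ δ₂) (hle : h₁ ≤ h₂) :
    Module.finrank (ZMod 2) (cyclicCode (ZMod 2) (2 * n)
      (bchGenerator (ZMod 2) β (δ₁ - 1) * bchGenerator (ZMod 2) β (δ₂ + 1))) =
      2 * n - (h₁ - 1 + h₂) * Module.finrank (ZMod 2) K := by
  have hδ := hδ₁.le_of_le hδ₂ hle
  have hlt := hδ₂.add_one_lt hn
  have hint (j : ℕ) : IsIntegral (ZMod 2) (β ^ j) := .of_finite _ _
  have hne (D : ℕ) (hD : D < n) : bchGenerator (ZMod 2) β D ≠ 0 := by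
    rw [bchGenerator_eq_prod_minpoly hn hβ hD]
    exact (monic_prod_of_monic _ _ fun a _ ↦ minpoly.monic (hint a)).ne_zero
  rw [finrank_cyclicCode (by omega) (mul_dvd_X_pow_two_mul_sub_one
      (bchGenerator_dvd_bchGenerator (by omega)) (bchGenerator_dvd_X_pow_sub_one hβ)),
    natDegree_mul (hne _ (by omega)) (hne _ (by omega)),
    natDegree_bchGenerator hp hn hβ (by omega), natDegree_bchGenerator hp hn hβ hlt,
    hδ₁.card_cosetLeadersLE_sub_one, hδ₂.card_cosetLeadersLE_add_one hn, ← add_mul]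

theorem min_le_minDist_cyclicCode_bchGenerator_mul (hn : Odd n) (hβ : IsPrimitiveRoot β n)
    (hδ₁ : IsNthSmallestLeader n h₁ δ₁) (hδ₂ : IsNthSmallestLeader n h₂ δ₂) (hle : h₁ ≤ h₂) :
    min (2 * δ₁) (δ₂ + 2) ≤ minDist (cyclicCode (ZMod 2) (2 * n)
      (bchGenerator (ZMod 2) β (δ₁ - 1) * bchGenerator (ZMod 2) β (δ₂ + 1))) := by
  have hδ := hδ₁.le_of_le hδ₂ hle
  have hlt := hδ₂.add_one_lt hn
  have := lt_minDist_cyclicCode_bchGenerator (F := ZMod 2) hβ (D := δ₁ - 1) (by omega)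
  have := lt_minDist_cyclicCode_bchGenerator (F := ZMod 2) hβ hlt
  have := min_le_minDist_cyclicCode_mul hn
    (bchGenerator_dvd_bchGenerator (F := ZMod 2) (β := β) (by omega : δ₁ - 1 ≤ δ₂ + 1))
    (bchGenerator_dvd_X_pow_sub_one hβ)
  omega

end RepeatedRootBCH

/-- for a prime `m ≥ 3`, `n = 2^m - 1`, `h2 = (2^{m-1} - 1)/m`,
`h1 = (h2 + 1)/2`, `δ_{h1}` and `δ_{h2}` the `h1`-th and `h2`-th smallest nonzero
`2`-cyclotomic coset leaders mod `n`, `g1 = lcm(m_β, …, m_{β^{δ_{h1} - 1}})` the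
generator polynomial of the BCH code `C_{(2,n,δ_{h1},1)}` (so `g1 = 1` when
`δ_{h1} = 1`), and `g = lcm(m_β, …, m_{β^{δ_{h2} + 1}})` the generator polynomial of
the BCH code `C_{(2,n,δ_{h2}+2,1)}` (with `β` a primitive element of `F_{2^m}`):
`g1` divides `g`, and the repeated-root binary cyclic code of length `2n` with
generator polynomial `g1(x) g(x)` has dimension `n + 2^{m-2} + (m+1)/2` and minimum
distance at least `(n-1)/m`. -/
theorem statement19 {K : Type*} [Field K] [Fintype K] [Algebra (ZMod 2) K]
    (m : ℕ) (hm : 3 ≤ m) (hmp : m.Prime) (hK : Fintype.card K = 2 ^ m)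
    (n : ℕ) (hn : n = 2 ^ m - 1)
    (h2 h1 : ℕ) (hh2 : m * h2 = 2 ^ (m - 1) - 1) (hh1 : 2 * h1 = h2 + 1)
    (β : K) (hβ : IsPrimitiveRoot β (2 ^ m - 1))
    (δ1 δ2 : ℕ) (hδ1 : IsNthSmallestLeader n h1 δ1) (hδ2 : IsNthSmallestLeader n h2 δ2)
    (g1 g : Polynomial (ZMod 2))
    (hg1 : g1 = (Finset.Icc 1 (δ1 - 1)).lcm fun j => minpoly (ZMod 2) (β ^ j))
    (hg : g = (Finset.Icc 1 (δ2 + 1)).lcm fun j => minpoly (ZMod 2) (β ^ j)) :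
    g1 ∣ g ∧
    Module.finrank (ZMod 2) (cyclicCode (ZMod 2) (2 * n) (g1 * g)) =
      n + 2 ^ (m - 2) + (m + 1) / 2 ∧
    (n - 1) / m ≤ minDist (cyclicCode (ZMod 2) (2 * n) (g1 * g)) := by
  have hn_odd : Odd (2 ^ m - 1) := Nat.Even.sub_odd Nat.one_le_two_pow
    (even_two.pow_of_ne_zero (by omega)) odd_one
  have hm_odd : Odd m := hmp.odd_of_ne_two (by rintro rfl; omega)
  have hrank : Module.finrank (ZMod 2) K = m := by
    rw [Module.card_eq_pow_finrank (K := ZMod 2), ZMod.card] at hK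
    exact Nat.pow_right_injective le_rfl hK
  subst hn
  have hh : h1 ≤ h2 := by omega
  have hδ := hδ1.le_of_le hδ2 hh
  obtain rfl : g1 = bchGenerator (ZMod 2) β (δ1 - 1) := hg1
  obtain rfl : g = bchGenerator (ZMod 2) β (δ2 + 1) := hg
  refine ⟨bchGenerator_dvd_bchGenerator (by omega), ?_, ?_⟩
  · rw [finrank_cyclicCode_bchGenerator_mul (hrank ▸ hmp) hn_odd hβ hδ1 hδ2 hh, hrank,
      two_mul_two_pow_sub_one_sub_mul hm_odd hh2 hh1]
  · rw [two_pow_sub_one_sub_one_div hmp.pos hh2]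
    refine le_trans ?_ (min_le_minDist_cyclicCode_bchGenerator_mul hn_odd hβ hδ1 hδ2 hh)
    have := hδ1.two_mul_le_add_one hn_odd
    have := hδ2.two_mul_le_add_one hn_odd
    omega
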